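/- Let ψ = Σ_{i=1}^M (f_i + h_i) and Ω = {x̂ ∈ S : ψ(x̂) = min_{x∈S} ψ(x)}, assumed nonempty. For each i ∈ I, every weak sequential cluster point of the sequence {w_n^{(i)}} generated by Algorithm 1 belongs to Ω. -/

import Mathlib

open Filter Topology

/-!
Two one-step estimates are carried through the inner steps, modulo small errors. The first compares
consecutive iterations: each inner step is nonexpansive up to `o(α_{n+1} λ_{n+1})` and its last
operation contracts by `1 - α_{n+1}`, so after division by `λ_n` Xu's lemma yields
`‖x_{n+1} - x_n‖ = o(λ_n)`. The second is the descent inequality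
`‖w_n⁽ⁱ⁺¹⁾ - v‖² + ½‖z_n⁽ⁱ⁾ - y_n⁽ⁱ⁾‖² + ‖y_n⁽ⁱ⁾ - T_i y_n⁽ⁱ⁾‖² ≤
  ‖w_n⁽ⁱ⁾ - v‖² + 2λ_n((f_i + h_i)(v) - (f_i + h_i)(y_n⁽ⁱ⁾)) + o(λ_n)`
for a common fixed point `v`. Summed over `i`, its distances telescope to
`‖x_n - v‖² - ‖x_{n+1} - v‖² = o(λ_n)`. Hence all residuals tend to zero, which makes the `y_n⁽ʲ⁾`
share the weak cluster points of the `w_n⁽ⁱ⁾` and places these in `S` by demiclosedness; division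
by `λ_n` gives `limsup_n ∑ (f_i + h_i)(y_n⁽ⁱ⁾) ≤ ψ(v)`, and weak lower semicontinuity concludes.
-/

open Asymptotics
open scoped NNReal RealInnerProductSpace

section RealInner

variable {H : Type*} [NormedAddCommGroup H] [InnerProductSpace ℝ H]

/-- Firmly nonexpansive self-maps of a real inner product space. -/
def IsFirmlyNonexpansive (T : H → H) : Prop :=
  ∀ x y : H, ‖T x - T y‖ ^ 2 ≤ ⟪T x - T y, x - y⟫

namespace IsFirmlyNonexpansive

variable {T : H → H}

theorem lipschitzWith_one (hT : IsFirmlyNonexpansive T) : LipschitzWith 1 T := by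
  refine LipschitzWith.mk_one fun x y => ?_
  have hsq : ‖T x - T y‖ ^ 2 ≤ ‖T x - T y‖ * ‖x - y‖ := (hT x y).trans (real_inner_le_norm _ _)
  rw [dist_eq_norm, dist_eq_norm]
  by_contra! hlt
  nlinarith [norm_nonneg (x - y)]

theorem norm_sub_sq_add_norm_sub_sq_le (hT : IsFirmlyNonexpansive T) {v : H} (hv : T v = v)
    (y : H) : ‖T y - v‖ ^ 2 + ‖y - T y‖ ^ 2 ≤ ‖y - v‖ ^ 2 := by
  have hfirm : ‖T y - v‖ ^ 2 ≤ ⟪y - v, T y - v⟫ := by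
    simpa only [hv, real_inner_comm] using hT y v
  have hexpand : ‖y - T y‖ ^ 2 = ‖y - v‖ ^ 2 - 2 * ⟪y - v, T y - v⟫ + ‖T y - v‖ ^ 2 := by
    rw [← norm_sub_sq_real, sub_sub_sub_cancel_right]
  linarith

end IsFirmlyNonexpansive

/-- `IsProx f c v p` says that `p` is the proximal point `prox_{c f}(v)`, in the form of the
minimization problem that characterizes it. -/
def IsProx (f : H → ℝ) (c : ℝ) (v p : H) : Prop :=
  ∀ u : H, f p + 1 / (2 * c) * ‖v - p‖ ^ 2 ≤ f u + 1 / (2 * c) * ‖v - u‖ ^ 2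

namespace IsProx

variable {f : H → ℝ} {c c' : ℝ} {v v' p p' : H}

theorem inner_le (hp : IsProx f c v p) (hf : ConvexOn ℝ Set.univ f) (hc : 0 < c) (u : H) :
    ⟪v - p, u - p⟫ ≤ c * (f u - f p) := by
  have hsegment : ∀ t ∈ Set.Ioc (0 : ℝ) 1,
      ⟪v - p, u - p⟫ ≤ c * (f u - f p) + t * (‖u - p‖ ^ 2 / 2) := by
    intro t ht
    have hmin := hp (p + t • (u - p))
    have hconv : f (p + t • (u - p)) ≤ f p + t * (f u - f p) := by
      have := hf.2 (Set.mem_univ p) (Set.mem_univ u) (sub_nonneg.2 ht.2) ht.1.le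
        (sub_add_cancel 1 t)
      rw [show (1 - t) • p + t • u = p + t • (u - p) by module, smul_eq_mul, smul_eq_mul] at this
      linarith
    have hexpand : ‖v - (p + t • (u - p))‖ ^ 2 =
        ‖v - p‖ ^ 2 - 2 * t * ⟪v - p, u - p⟫ + t ^ 2 * ‖u - p‖ ^ 2 := by
      rw [← sub_sub, norm_sub_sq_real, inner_smul_right, norm_smul, mul_pow, Real.norm_eq_abs,
        sq_abs]
      ring
    have hscaled : 0 ≤ 2 * t * (c * (f u - f p) + t * (‖u - p‖ ^ 2 / 2) - ⟪v - p, u - p⟫) := by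
      have : 0 ≤ 2 * c * (t * (f u - f p) +
          1 / (2 * c) * (t ^ 2 * ‖u - p‖ ^ 2 - 2 * t * ⟪v - p, u - p⟫)) := by
        refine mul_nonneg (by positivity) ?_
        rw [hexpand] at hmin
        linarith
      convert this using 1
      field_simp
      ring
    linarith [nonneg_of_mul_nonneg_right hscaled (mul_pos two_pos ht.1)]
  have hlim : Tendsto (fun t : ℝ => c * (f u - f p) + t * (‖u - p‖ ^ 2 / 2)) (𝓝[>] 0)
      (𝓝 (c * (f u - f p))) :=
    tendsto_nhdsWithin_of_tendsto_nhds (Continuous.tendsto' (by fun_prop) _ _ (by simp))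
  exact ge_of_tendsto hlim (mem_of_superset (Ioc_mem_nhdsGT one_pos) hsegment)

theorem norm_sub_le (hp : IsProx f c v p) (hp' : IsProx f c' v' p') (hf : ConvexOn ℝ Set.univ f)
    (hc : 0 < c) (hc' : 0 < c') :
    ‖p - p'‖ ≤ ‖v - v'‖ + |1 - c / c'| * ‖v' - p'‖ := by
  set e := (v - v') + (1 - c / c') • (v' - p') with he
  have hrescaled : c / c' * ⟪v' - p', p - p'⟫ ≤ c * (f p - f p') := by
    refine (mul_le_mul_of_nonneg_left (hp'.inner_le hf hc' p) (by positivity)).trans_eq ?_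
    field_simp
  have hsq : ‖p - p'‖ ^ 2 ≤ ⟪e, p - p'⟫ := by
    have hvar := hp.inner_le hf hc p'
    rw [show v - p = e + (c / c') • (v' - p') - (p - p') by rw [he]; module, ← neg_sub p p',
      inner_neg_right, inner_sub_left, inner_add_left, real_inner_self_eq_norm_sq,
      real_inner_smul_left] at hvar
    linarith
  have hle : ‖p - p'‖ ≤ ‖e‖ := by
    have := hsq.trans (real_inner_le_norm _ _)
    by_contra! hlt
    nlinarith [norm_nonneg e]
  exact hle.trans ((norm_add_le _ _).trans_eq (by rw [norm_smul, Real.norm_eq_abs]))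

end IsProx

theorem norm_convexCombination_sub_sq_le {a : ℝ} (ha₀ : 0 ≤ a) (ha₁ : a ≤ 1) (x y v : H) :
    ‖a • x + (1 - a) • y - v‖ ^ 2 ≤ a * ‖x - v‖ ^ 2 + ‖y - v‖ ^ 2 := by
  have hconv : ‖a • (x - v) + (1 - a) • (y - v)‖ ^ 2 ≤
      a * ‖x - v‖ ^ 2 + (1 - a) * ‖y - v‖ ^ 2 :=
    ((convexOn_univ_norm (E := H)).pow (fun _ _ => norm_nonneg _) 2).2 (Set.mem_univ _)
      (Set.mem_univ _) ha₀ (sub_nonneg.2 ha₁) (add_sub_cancel a 1)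
  rw [show a • x + (1 - a) • y - v = a • (x - v) + (1 - a) • (y - v) by module]
  linarith [mul_nonneg ha₀ (sq_nonneg ‖y - v‖)]

end RealInner

section SmoothConvex

variable {H : Type*} [NormedAddCommGroup H] [InnerProductSpace ℝ H] [CompleteSpace H]
  {h : H → ℝ} {h' : H → H} {K : ℝ≥0}

theorem hasDerivAt_comp_lineMap {x y g : H} {t : ℝ}
    (hg : HasGradientAt h g (AffineMap.lineMap x y t)) :
    HasDerivAt (fun s => h (AffineMap.lineMap x y s)) ⟪g, y - x⟫ t :=
  (hg.hasFDerivAt.comp_hasDerivAt t AffineMap.hasDerivAt_lineMap).congr_deriv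
    (InnerProductSpace.toDual_apply_apply ..)

theorem add_inner_gradient_le {x g : H} (hh : ConvexOn ℝ Set.univ h) (hg : HasGradientAt h g x)
    (y : H) : h x + ⟪g, y - x⟫ ≤ h y := by
  have hline : ConvexOn ℝ Set.univ (h ∘ AffineMap.lineMap (k := ℝ) x y) := hh.comp_affineMap _
  have hderiv : HasDerivAt (h ∘ AffineMap.lineMap (k := ℝ) x y) ⟪g, y - x⟫ 0 :=
    hasDerivAt_comp_lineMap (by rwa [AffineMap.lineMap_apply_zero])
  have hslope := hline.le_slope_of_hasDerivAt (Set.mem_univ 0) (Set.mem_univ 1) one_pos hderiv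
  simp only [slope_def_field, Function.comp_apply, AffineMap.lineMap_apply_one,
    AffineMap.lineMap_apply_zero, sub_zero, div_one] at hslope
  linarith

theorem le_add_inner_gradient_add_sq (hg : ∀ x, HasGradientAt h (h' x) x)
    (hK : LipschitzWith K h') (x y : H) :
    h y ≤ h x + ⟪h' x, y - x⟫ + K / 2 * ‖y - x‖ ^ 2 := by
  have hline := fun t => hasDerivAt_comp_lineMap (hg (AffineMap.lineMap x y t))
  have hbound : ∀ t : ℝ, HasDerivAt
      (fun t => h x + t * ⟪h' x, y - x⟫ + t ^ 2 * (K / 2 * ‖y - x‖ ^ 2))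
      (⟪h' x, y - x⟫ + t * (K * ‖y - x‖ ^ 2)) t := fun t =>
    ((((hasDerivAt_id t).mul_const ⟪h' x, y - x⟫).const_add (h x)).add
      (((hasDerivAt_id t).pow 2).mul_const (K / 2 * ‖y - x‖ ^ 2))).congr_deriv (by
        simp only [id_eq, Nat.cast_ofNat, Nat.add_one_sub_one, pow_one]; ring)
  have hslope : ∀ t ∈ Set.Ico (0 : ℝ) 1,
      ⟪h' (AffineMap.lineMap x y t), y - x⟫ ≤ ⟪h' x, y - x⟫ + t * (K * ‖y - x‖ ^ 2) := by
    intro t ht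
    have hlip : ‖h' (AffineMap.lineMap x y t) - h' x‖ ≤ K * (t * ‖y - x‖) := by
      refine (hK.norm_sub_le _ _).trans_eq ?_
      rw [AffineMap.lineMap_apply_module', add_sub_cancel_right, norm_smul,
        Real.norm_of_nonneg ht.1]
    have hcs := (real_inner_le_norm (h' (AffineMap.lineMap x y t) - h' x) (y - x)).trans
      (mul_le_mul_of_nonneg_right hlip (norm_nonneg _))
    rw [inner_sub_left] at hcs
    linarith
  simpa using image_le_of_deriv_right_le_deriv_boundary
    (fun t _ => (hline t).continuousAt.continuousWithinAt)
    (fun t _ => (hline t).hasDerivWithinAt) (by simp)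
    (fun t _ => (hbound t).continuousAt.continuousWithinAt)
    (fun t _ => (hbound t).hasDerivWithinAt) hslope (Set.right_mem_Icc.2 zero_le_one)

theorem add_inner_gradient_add_sq_le (hh : ConvexOn ℝ Set.univ h)
    (hg : ∀ x, HasGradientAt h (h' x) x) (hK : LipschitzWith K h') (x y : H) :
    K * (h x + ⟪h' x, y - x⟫) + ‖h' x - h' y‖ ^ 2 / 2 ≤ K * h y := by
  rcases eq_or_ne K 0 with rfl | hK₀
  · have : ‖h' x - h' y‖ ≤ 0 := by simpa using hK.norm_sub_le x y
    simp [norm_le_zero_iff.1 this]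
  have hKpos : (0 : ℝ) < K := NNReal.coe_pos.2 hK₀.bot_lt
  -- The point reached from `y` by a gradient step for `h - ⟪h' x, ·⟫`, which `x` minimizes.
  set s := h' y - h' x with hs
  have hbelow := add_inner_gradient_le hh (hg x) (y - (K : ℝ)⁻¹ • s)
  have habove := le_add_inner_gradient_add_sq hg hK y (y - (K : ℝ)⁻¹ • s)
  rw [sub_right_comm, inner_sub_right, inner_smul_right] at hbelow
  rw [sub_sub_cancel_left, inner_neg_right, inner_smul_right, norm_neg, norm_smul, mul_pow,
    Real.norm_eq_abs, sq_abs] at habove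
  have hsq : ⟪h' y, s⟫ - ⟪h' x, s⟫ = ‖s‖ ^ 2 := by
    rw [← inner_sub_left, ← hs, real_inner_self_eq_norm_sq]
  have hcombined := mul_le_mul_of_nonneg_left (hbelow.trans habove) hKpos.le
  rw [norm_sub_rev, ← hs]
  field_simp at hcombined ⊢
  linarith

/-- The Baillon–Haddad theorem. -/
theorem norm_gradient_sub_sq_le (hh : ConvexOn ℝ Set.univ h)
    (hg : ∀ x, HasGradientAt h (h' x) x) (hK : LipschitzWith K h') (x y : H) :
    ‖h' x - h' y‖ ^ 2 ≤ K * ⟪h' x - h' y, x - y⟫ := by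
  have hxy := add_inner_gradient_add_sq_le hh hg hK x y
  have hyx := add_inner_gradient_add_sq_le hh hg hK y x
  rw [norm_sub_rev] at hyx
  have hinner : ⟪h' x - h' y, x - y⟫ = -⟪h' x, y - x⟫ - ⟪h' y, x - y⟫ := by
    rw [inner_sub_left, ← neg_sub y x, inner_neg_right]
  rw [hinner]
  linarith

theorem norm_gradientStep_sub_le (hh : ConvexOn ℝ Set.univ h)
    (hg : ∀ x, HasGradientAt h (h' x) x) (hK : LipschitzWith K h') {c : ℝ} (hc₀ : 0 ≤ c)
    (hc : c * K ≤ 2) (x y : H) : ‖(x - c • h' x) - (y - c • h' y)‖ ≤ ‖x - y‖ := by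
  rw [sub_sub_sub_comm, ← smul_sub]
  set s := h' x - h' y
  have hmono : 0 ≤ ⟪s, x - y⟫ := by
    have hxy := add_inner_gradient_le hh (hg x) y
    have hyx := add_inner_gradient_le hh (hg y) x
    rw [← neg_sub x y, inner_neg_right] at hxy
    rw [inner_sub_left]
    linarith
  have hcoco : c * ‖s‖ ^ 2 ≤ 2 * ⟪s, x - y⟫ :=
    calc c * ‖s‖ ^ 2 ≤ c * (K * ⟪s, x - y⟫) :=
          mul_le_mul_of_nonneg_left (norm_gradient_sub_sq_le hh hg hK x y) hc₀
      _ = c * K * ⟪s, x - y⟫ := (mul_assoc _ _ _).symm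
      _ ≤ 2 * ⟪s, x - y⟫ := mul_le_mul_of_nonneg_right hc hmono
  refine le_of_sq_le_sq ?_ (norm_nonneg _)
  rw [norm_sub_sq_real, real_inner_smul_right, norm_smul, mul_pow, Real.norm_eq_abs, sq_abs,
    real_inner_comm]
  linarith [mul_le_mul_of_nonneg_left hcoco hc₀]

theorem IsProx.norm_sub_sq_add_le {f : H → ℝ} {c : ℝ} {z e p : H}
    (hp : IsProx f c (z + c • (e - h' z)) p) (hf : ConvexOn ℝ Set.univ f)
    (hh : ConvexOn ℝ Set.univ h) (hg : ∀ x, HasGradientAt h (h' x) x) (hK : LipschitzWith K h')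
    (hc : 0 < c) (v : H) :
    ‖p - v‖ ^ 2 + (1 - c * K) * ‖z - p‖ ^ 2 ≤
      ‖z - v‖ ^ 2 + 2 * c * (f v + h v - (f p + h p) + ⟪e, p - v⟫) := by
  have hprox : -⟪z - p, p - v⟫ - c * (⟪e, p - v⟫ - ⟪h' z, p - v⟫) ≤ c * (f v - f p) := by
    have := hp.inner_le hf hc v
    rw [show z + c • (e - h' z) - p = (z - p) + c • (e - h' z) by abel, ← neg_sub p v,
      inner_neg_right, inner_add_left, real_inner_smul_left, inner_sub_left e] at this
    linarith
  have hsmooth : -⟪h' z, p - v⟫ ≤ h v - h p + K / 2 * ‖z - p‖ ^ 2 := by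
    have hbelow := add_inner_gradient_le hh (hg z) v
    have habove := le_add_inner_gradient_add_sq hg hK z p
    rw [norm_sub_rev] at habove
    rw [← inner_neg_right, neg_sub, ← sub_sub_sub_cancel_right v p z, inner_sub_right]
    linarith
  have hexpand : ‖z - v‖ ^ 2 = ‖z - p‖ ^ 2 + 2 * ⟪z - p, p - v⟫ + ‖p - v‖ ^ 2 := by
    rw [← norm_add_sq_real, sub_add_sub_cancel]
  linarith [mul_le_mul_of_nonneg_left hsmooth hc.le]

end SmoothConvex

section RealSequences

theorem exists_eventually_le_of_le_add_mul {a : ℕ → ℝ} {c C : ℝ} (hc₀ : 0 ≤ c) (hc₁ : c < 1)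
    (ha : ∀ᶠ n in atTop, a (n + 1) ≤ C + c * a n) : ∃ B, ∀ᶠ n in atTop, a n ≤ B := by
  obtain ⟨N, hN⟩ := eventually_atTop.1 ha
  set B := max (a N) (C / (1 - c))
  have hB : C + c * B ≤ B := by
    have := (div_le_iff₀ (sub_pos.2 hc₁)).1 (le_max_right (a N) (C / (1 - c)))
    linarith
  refine ⟨B, eventually_atTop.2 ⟨N, fun n hn => ?_⟩⟩
  induction n, hn using Nat.le_induction with
  | base => exact le_max_left _ _
  | succ n hn ih => linarith [hN n hn, mul_le_mul_of_nonneg_left ih hc₀]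

theorem tendsto_zero_of_le_one_sub_mul {a γ : ℕ → ℝ} (ha : ∀ n, 0 ≤ a n) (hγ : ∀ n, 0 ≤ γ n)
    (hsum : ¬ Summable γ) (hrec : ∀ᶠ n in atTop, a (n + 1) ≤ (1 - γ n) * a n) :
    Tendsto a atTop (𝓝 0) := by
  obtain ⟨N, hN⟩ := eventually_atTop.1 hrec
  have hexp : ∀ n ≥ N,
      a n ≤ Real.exp (∑ k ∈ Finset.range N, γ k - ∑ k ∈ Finset.range n, γ k) * a N := by
    intro n hn
    induction n, hn using Nat.le_induction with
    | base => simp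
    | succ n hn ih =>
      calc a (n + 1) ≤ (1 - γ n) * a n := hN n hn
        _ ≤ Real.exp (-γ n) * a n :=
          mul_le_mul_of_nonneg_right (Real.one_sub_le_exp_neg _) (ha n)
        _ ≤ Real.exp (-γ n) * (Real.exp (∑ k ∈ Finset.range N, γ k -
              ∑ k ∈ Finset.range n, γ k) * a N) :=
          mul_le_mul_of_nonneg_left ih (Real.exp_pos _).le
        _ = _ := by rw [← mul_assoc, ← Real.exp_add, Finset.sum_range_succ]; ring_nf
  have hdiverge : Tendsto (fun n => ∑ k ∈ Finset.range N, γ k - ∑ k ∈ Finset.range n, γ k)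
      atTop atBot :=
    tendsto_atBot_add_const_left _ _ (tendsto_neg_atTop_atBot.comp
      ((not_summable_iff_tendsto_nat_atTop_of_nonneg hγ).1 hsum))
  have hzero : Tendsto (fun n => Real.exp (∑ k ∈ Finset.range N, γ k -
      ∑ k ∈ Finset.range n, γ k) * a N) atTop (𝓝 0) := by
    simpa only [zero_mul, Function.comp_def] using
      (Real.tendsto_exp_atBot.comp hdiverge).mul_const (a N)
  exact squeeze_zero' (.of_forall ha) (eventually_atTop.2 ⟨N, hexp⟩) hzero

/-- `LEModLittleO l r a b` says that `a ≤ b + o(r)` along the filter `l`. It lets the chains of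
estimates below be composed without naming their error terms. -/
def LEModLittleO {ι : Type*} (l : Filter ι) (r a b : ι → ℝ) : Prop :=
  ∃ e : ι → ℝ, e =o[l] r ∧ ∀ᶠ n in l, a n ≤ b n + e n

namespace LEModLittleO

variable {ι : Type*} {l : Filter ι} {r a b c : ι → ℝ}

theorem of_isLittleO {E : Type*} [SeminormedAddCommGroup E] {e : ι → E} (he : e =o[l] r)
    (hab : ∀ᶠ n in l, a n ≤ b n + ‖e n‖) : LEModLittleO l r a b :=
  ⟨fun n => ‖e n‖, he.norm_left, hab⟩

theorem of_isLittleO_sub (hab : (fun n => a n - b n) =o[l] r) : LEModLittleO l r a b :=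
  ⟨_, hab, .of_forall fun n => (add_sub_cancel (b n) (a n)).ge⟩

theorem of_eventuallyLE (hab : a ≤ᶠ[l] b) : LEModLittleO l r a b :=
  ⟨0, isLittleO_zero r l, hab.mono fun n hn => hn.trans_eq (add_zero (b n)).symm⟩

theorem add {a' b' : ι → ℝ} (hab : LEModLittleO l r a b) (hab' : LEModLittleO l r a' b') :
    LEModLittleO l r (fun n => a n + a' n) (fun n => b n + b' n) := by
  obtain ⟨e, he, hab⟩ := hab
  obtain ⟨e', he', hab'⟩ := hab'
  exact ⟨_, he.add he', by filter_upwards [hab, hab'] with n h h'; linarith⟩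

theorem trans (hab : LEModLittleO l r a b) (hbc : LEModLittleO l r b c) : LEModLittleO l r a c := by
  obtain ⟨e, he, hab⟩ := hab
  obtain ⟨e', he', hbc⟩ := hbc
  exact ⟨_, he'.add he, by filter_upwards [hab, hbc] with n h h'; linarith⟩

theorem mul_left (hab : LEModLittleO l r a b) {s : ι → ℝ}
    (hs : ∀ᶠ n in l, s n ∈ Set.Icc (0 : ℝ) 1) :
    LEModLittleO l r (fun n => s n * a n) (fun n => s n * b n) := by
  obtain ⟨e, he, hab⟩ := hab
  refine .of_isLittleO he ?_
  filter_upwards [hab, hs] with n h ⟨hs₀, hs₁⟩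
  calc s n * a n ≤ s n * (b n + ‖e n‖) :=
        mul_le_mul_of_nonneg_left (h.trans (by gcongr; exact Real.le_norm_self _)) hs₀
    _ ≤ s n * b n + ‖e n‖ := by linarith [mul_le_mul_of_nonneg_right hs₁ (norm_nonneg (e n))]

theorem sum {κ : Type*} {s : Finset κ} {a b : κ → ι → ℝ}
    (hab : ∀ i ∈ s, LEModLittleO l r (a i) (b i)) :
    LEModLittleO l r (fun n => ∑ i ∈ s, a i n) (fun n => ∑ i ∈ s, b i n) := by
  choose! e he hab using hab
  refine ⟨fun n => ∑ i ∈ s, e i n, .fun_sum he, ?_⟩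
  filter_upwards [s.eventually_all.2 hab] with n hn
  rw [← Finset.sum_add_distrib]
  exact Finset.sum_le_sum hn

theorem div_right (hab : LEModLittleO l r a b) {s : ι → ℝ} (hs : ∀ n, 0 < s n) :
    LEModLittleO l (fun n => r n / s n) (fun n => a n / s n) (fun n => b n / s n) := by
  obtain ⟨e, he, hab⟩ := hab
  refine ⟨fun n => e n / s n, ?_, hab.mono fun n hn => ?_⟩
  · simpa only [div_eq_mul_inv] using he.mul_isBigO (isBigO_refl (fun n => (s n)⁻¹) l)
  · rw [← add_div]
    exact div_le_div_of_nonneg_right hn (hs n).le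

theorem mono {l' : Filter ι} (hab : LEModLittleO l r a b) (hl : l' ≤ l) :
    LEModLittleO l' r a b := by
  obtain ⟨e, he, hab⟩ := hab
  exact ⟨e, he.mono hl, hab.filter_mono hl⟩

theorem le_of_const [l.NeBot] {x y : ℝ}
    (hxy : LEModLittleO l (fun _ => 1) (fun _ => x) (fun _ => y)) : x ≤ y := by
  obtain ⟨e, he, hxy⟩ := hxy
  simpa only [add_zero] using ge_of_tendsto (((isLittleO_one_iff ℝ).1 he).const_add y) hxy

/-- Xu's lemma. -/
theorem tendsto_zero {a γ : ℕ → ℝ} (hrec : LEModLittleO atTop γ (fun n => a (n + 1))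
      (fun n => (1 - γ n) * a n)) (ha : ∀ n, 0 ≤ a n) (hγ : ∀ n, 0 ≤ γ n)
    (hγ₁ : ∀ᶠ n in atTop, γ n ≤ 1) (hsum : ¬ Summable γ) : Tendsto a atTop (𝓝 0) := by
  obtain ⟨e, he, hrec⟩ := hrec
  refine tendsto_order.2 ⟨fun ε hε => .of_forall fun n => hε.trans_le (ha n), fun ε hε => ?_⟩
  have hexcess : Tendsto (fun n => max (a n - ε / 2) 0) atTop (𝓝 0) := by
    refine tendsto_zero_of_le_one_sub_mul (fun _ => le_max_right _ _) hγ hsum ?_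
    filter_upwards [hrec, he.def (half_pos hε), hγ₁] with n hn hen hn₁
    have hen' : e n ≤ ε / 2 * γ n :=
      (Real.le_norm_self _).trans (hen.trans_eq (by rw [Real.norm_of_nonneg (hγ n)]))
    have hmul := mul_le_mul_of_nonneg_left (le_max_left (a n - ε / 2) 0) (sub_nonneg.2 hn₁)
    exact max_le (by linarith) (mul_nonneg (sub_nonneg.2 hn₁) (le_max_right _ _))
  filter_upwards [hexcess.eventually_lt_const (half_pos hε)] with n hn
  linarith [le_max_left (a n - ε / 2) 0]

end LEModLittleO

end RealSequences

section ControlSequences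

/-- The parameter sequences of the algorithm: `θ` are the inertial weights, `lam` the step sizes,
`β` the conjugate-gradient weights and `α` the Halpern weights; the last six fields are
conditions (C1)–(C5) and (C7). -/
structure ControlSequences (θ lam β α : ℕ → ℝ) : Prop where
  lam_pos : ∀ n, 0 < lam n
  α_pos : ∀ n, 0 < α n
  tendsto_lam : Tendsto lam atTop (𝓝 0)
  not_summable : ¬ Summable α
  tendsto_inv_lam_sub :
    Tendsto (fun n => (1 / α (n + 1)) * |1 / lam (n + 1) - 1 / lam n|) atTop (𝓝 0)
  tendsto_one_sub_α_div :
    Tendsto (fun n => (1 / lam (n + 1)) * |1 - α n / α (n + 1)|) atTop (𝓝 0)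
  tendsto_α_div_lam : Tendsto (fun n => α n / lam n) atTop (𝓝 0)
  tendsto_θ_div : Tendsto (fun n => θ n / (α (n + 1) * lam (n + 1))) atTop (𝓝 0)
  tendsto_β_div : Tendsto (fun n => β n / α (n + 1)) atTop (𝓝 0)

namespace ControlSequences

variable {θ lam β α : ℕ → ℝ}

theorem scale_ne_zero (hc : ControlSequences θ lam β α) (n : ℕ) :
    α (n + 1) * lam (n + 1) ≠ 0 :=
  (mul_pos (hc.α_pos _) (hc.lam_pos _)).ne'

theorem α_isLittleO_lam (hc : ControlSequences θ lam β α) : α =o[atTop] lam :=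
  isLittleO_of_tendsto (fun n hn => absurd hn (hc.lam_pos n).ne') hc.tendsto_α_div_lam

theorem tendsto_α (hc : ControlSequences θ lam β α) : Tendsto α atTop (𝓝 0) :=
  hc.α_isLittleO_lam.trans_tendsto hc.tendsto_lam

theorem eventually_one_sub_α_mem_Icc (hc : ControlSequences θ lam β α) :
    ∀ᶠ n in atTop, 1 - α (n + 1) ∈ Set.Icc (0 : ℝ) 1 := by
  filter_upwards [(hc.tendsto_α.comp (tendsto_add_atTop_nat 1)).eventually_le_const one_pos]
    with n hn
  exact ⟨sub_nonneg.2 hn, sub_le_self 1 (hc.α_pos _).le⟩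

theorem θ_isLittleO (hc : ControlSequences θ lam β α) :
    θ =o[atTop] (fun n => α (n + 1) * lam (n + 1)) :=
  isLittleO_of_tendsto (fun n hn => absurd hn (hc.scale_ne_zero n)) hc.tendsto_θ_div

theorem β_isLittleO (hc : ControlSequences θ lam β α) : β =o[atTop] (fun n => α (n + 1)) :=
  isLittleO_of_tendsto (fun n hn => absurd hn (hc.α_pos (n + 1)).ne') hc.tendsto_β_div

theorem tendsto_β (hc : ControlSequences θ lam β α) : Tendsto β atTop (𝓝 0) :=
  hc.β_isLittleO.trans_tendsto (hc.tendsto_α.comp (tendsto_add_atTop_nat 1))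

theorem α_sub_isLittleO (hc : ControlSequences θ lam β α) :
    (fun n => α (n + 1) - α n) =o[atTop] (fun n => α (n + 1) * lam (n + 1)) := by
  refine isLittleO_of_tendsto (fun n hn => absurd hn (hc.scale_ne_zero n))
    (tendsto_zero_iff_norm_tendsto_zero.2 (hc.tendsto_one_sub_α_div.congr fun n => ?_))
  have hα := hc.α_pos (n + 1)
  have hlam := hc.lam_pos (n + 1)
  rw [one_sub_div hα.ne', norm_div, norm_mul, abs_div, Real.norm_eq_abs, Real.norm_eq_abs,
    Real.norm_eq_abs, abs_of_pos hlam, abs_of_pos hα]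
  field_simp

theorem inv_lam_sub_isLittleO (hc : ControlSequences θ lam β α) :
    (fun n => (lam (n + 1))⁻¹ - (lam n)⁻¹) =o[atTop] (fun n => α (n + 1)) := by
  refine isLittleO_of_tendsto (fun n hn => absurd hn (hc.α_pos (n + 1)).ne')
    (tendsto_zero_iff_norm_tendsto_zero.2 (hc.tendsto_inv_lam_sub.congr fun n => ?_))
  rw [norm_div, Real.norm_of_nonneg (hc.α_pos (n + 1)).le, Real.norm_eq_abs, one_div, one_div,
    one_div, inv_mul_eq_div]

theorem one_sub_lam_div_isLittleO (hc : ControlSequences θ lam β α) :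
    (fun n => 1 - lam (n + 1) / lam n) =o[atTop] (fun n => α (n + 1) * lam (n + 1)) := by
  refine (hc.inv_lam_sub_isLittleO.mul_isBigO (isBigO_refl (fun n => lam (n + 1)) _)).congr_left
    fun n => ?_
  rw [sub_mul, inv_mul_cancel₀ (hc.lam_pos (n + 1)).ne', inv_mul_eq_div]

theorem scale_isLittleO_lam_succ (hc : ControlSequences θ lam β α) :
    (fun n => α (n + 1) * lam (n + 1)) =o[atTop] (fun n => lam (n + 1)) :=
  (((isLittleO_one_iff ℝ).2 (hc.tendsto_α.comp (tendsto_add_atTop_nat 1))).mul_isBigO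
    (isBigO_refl _ _)).congr_right fun _ => one_mul _

theorem scale_isLittleO_α_succ (hc : ControlSequences θ lam β α) :
    (fun n => α (n + 1) * lam (n + 1)) =o[atTop] (fun n => α (n + 1)) :=
  ((isBigO_refl _ _).mul_isLittleO ((isLittleO_one_iff ℝ).2
    (hc.tendsto_lam.comp (tendsto_add_atTop_nat 1)))).congr_right fun _ => mul_one _

theorem lam_sub_isLittleO (hc : ControlSequences θ lam β α) :
    (fun n => lam (n + 1) - lam n) =o[atTop] (fun n => α (n + 1) * lam (n + 1)) := by
  have := (hc.tendsto_lam.isBigO_one ℝ).mul_isLittleO hc.one_sub_lam_div_isLittleO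
  refine (this.neg_left.congr (fun n => ?_) fun n => one_mul _)
  rw [mul_sub, mul_div_cancel₀ _ (hc.lam_pos n).ne', mul_one, neg_sub]

theorem lam_isEquivalent (hc : ControlSequences θ lam β α) :
    lam ~[atTop] (fun n => lam (n + 1)) :=
  hc.lam_sub_isLittleO.symm.trans hc.scale_isLittleO_lam_succ

theorem α_isEquivalent (hc : ControlSequences θ lam β α) : α ~[atTop] (fun n => α (n + 1)) :=
  hc.α_sub_isLittleO.symm.trans hc.scale_isLittleO_α_succ

theorem scale_isLittleO_lam (hc : ControlSequences θ lam β α) :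
    (fun n => α (n + 1) * lam (n + 1)) =o[atTop] lam :=
  hc.scale_isLittleO_lam_succ.trans_isBigO hc.lam_isEquivalent.isBigO_symm

theorem lam_mul_β_isLittleO (hc : ControlSequences θ lam β α) :
    (fun n => lam n * β n) =o[atTop] (fun n => α (n + 1) * lam (n + 1)) :=
  (hc.lam_isEquivalent.isBigO.mul_isLittleO hc.β_isLittleO).congr_right fun _ => mul_comm _ _

theorem scale_succ_isBigO_scale (hc : ControlSequences θ lam β α) :
    (fun n => α (n + 2) * lam (n + 2)) =O[atTop] (fun n => α (n + 1) * lam (n + 1)) :=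
  (hc.α_isEquivalent.isBigO_symm.mul hc.lam_isEquivalent.isBigO_symm).comp_tendsto
    (tendsto_add_atTop_nat 1)

theorem lam_mul_β_succ_isLittleO (hc : ControlSequences θ lam β α) :
    (fun n => lam (n + 1) * β (n + 1)) =o[atTop] (fun n => α (n + 1) * lam (n + 1)) :=
  (hc.lam_mul_β_isLittleO.comp_tendsto (tendsto_add_atTop_nat 1)).trans_isBigO
    hc.scale_succ_isBigO_scale

theorem isLittleO_lam_of_le (hc : ControlSequences θ lam β α) {q : ℕ → ℝ} (hq₀ : ∀ n, 0 ≤ q n)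
    (hq : q =O[atTop] (fun _ => (1 : ℝ)))
    (hrec : LEModLittleO atTop (fun n => α (n + 1) * lam (n + 1)) (fun n => q (n + 1))
      (fun n => (1 - α (n + 1)) * q n)) : q =o[atTop] lam := by
  have hα : Tendsto (fun n => α (n + 1)) atTop (𝓝 0) :=
    hc.tendsto_α.comp (tendsto_add_atTop_nat 1)
  have hrescale : LEModLittleO atTop (fun n => α (n + 1))
      (fun n => (1 - α (n + 1)) * q n / lam (n + 1))
      (fun n => (1 - α (n + 1)) * (q n / lam n)) := by
    have hbdd : (fun n => (1 - α (n + 1)) * q n) =O[atTop] (fun _ => (1 : ℝ)) := by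
      simpa only [mul_one] using ((hα.const_sub 1).isBigO_one ℝ).mul hq
    refine ⟨_, (hbdd.mul_isLittleO hc.inv_lam_sub_isLittleO).congr_right fun _ => one_mul _,
      .of_forall fun n => le_of_eq ?_⟩
    ring
  have hquot : LEModLittleO atTop (fun n => α (n + 1)) (fun n => q (n + 1) / lam (n + 1))
      (fun n => (1 - α (n + 1)) * (q n / lam n)) := by
    have := hrec.div_right fun n => hc.lam_pos (n + 1)
    simp only [mul_div_cancel_right₀ _ (hc.lam_pos _).ne'] at this
    exact this.trans hrescale
  refine isLittleO_of_tendsto (fun n hn => absurd hn (hc.lam_pos n).ne') (hquot.tendsto_zero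
    (fun n => div_nonneg (hq₀ n) (hc.lam_pos n).le) (fun n => (hc.α_pos _).le)
    (hα.eventually_le_const one_pos) ?_)
  rw [summable_nat_add_iff 1]
  exact hc.not_summable

end ControlSequences

end ControlSequences

section BoundedFamilies

theorem tendsto_zero_of_norm_sq_le {ι E : Type*} [SeminormedAddCommGroup E] {l : Filter ι}
    {v : ι → E} {b : ι → ℝ} (hvb : ∀ n, ‖v n‖ ^ 2 ≤ b n) (hb : Tendsto b l (𝓝 0)) :
    Tendsto v l (𝓝 0) :=
  squeeze_zero_norm (fun n => Real.le_sqrt_of_sq_le (hvb n)) (by simpa using hb.sqrt)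

theorem isLittleO_smul_of_isBigO_one {ι E : Type*} [SeminormedAddCommGroup E] [NormedSpace ℝ E]
    {l : Filter ι} {k r : ι → ℝ} {v : ι → E} (hk : k =o[l] r) (hv : v =O[l] (fun _ => (1 : ℝ))) :
    (fun n => k n • v n) =o[l] r :=
  (hk.smul_isBigO hv).congr_right fun _ => mul_one _

theorem isBigO_one_smul {ι E : Type*} [SeminormedAddCommGroup E] [NormedSpace ℝ E]
    {l : Filter ι} {k : ι → ℝ} {v : ι → E} (hk : k =O[l] (fun _ => (1 : ℝ)))
    (hv : v =O[l] (fun _ => (1 : ℝ))) : (fun n => k n • v n) =O[l] (fun _ => (1 : ℝ)) :=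
  (hk.smul hv).congr_right fun _ => mul_one 1

theorem isBigO_one_comp_of_lipschitzWith {ι E F : Type*} [SeminormedAddCommGroup E]
    [SeminormedAddCommGroup F] {l : Filter ι} {K : ℝ≥0} {g : E → F} {v : ι → E}
    (hg : LipschitzWith K g)
    (hv : v =O[l] (fun _ => (1 : ℝ))) : (fun n => g (v n)) =O[l] (fun _ => (1 : ℝ)) := by
  have hdiff : (fun n => g (v n) - g 0) =O[l] v :=
    .of_bound K (.of_forall fun n => by simpa only [sub_zero] using hg.norm_sub_le (v n) 0)
  simpa only [sub_add_cancel] using (hdiff.trans hv).add (isBigO_const_const (g 0) one_ne_zero l)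

variable {ι H : Type*} [NormedAddCommGroup H] [InnerProductSpace ℝ H] {l : Filter ι} {v w : ι → H}

theorem isBigO_inner (v w : ι → H) (l : Filter ι) :
    (fun n => ⟪v n, w n⟫) =O[l] (fun n => ‖v n‖ * ‖w n‖) :=
  .of_norm_le fun n => norm_inner_le_norm (v n) (w n)

theorem isBigO_one_inner (hv : v =O[l] (fun _ => (1 : ℝ))) (hw : w =O[l] (fun _ => (1 : ℝ))) :
    (fun n => ⟪v n, w n⟫) =O[l] (fun _ => (1 : ℝ)) := by
  simpa only [mul_one] using (isBigO_inner v w l).trans (hv.norm_left.mul hw.norm_left)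

theorem tendsto_inner_zero (hv : Tendsto v l (𝓝 0)) (hw : w =O[l] (fun _ => (1 : ℝ))) :
    Tendsto (fun n => ⟪v n, w n⟫) l (𝓝 0) := by
  have hprod : (fun n => ‖v n‖ * ‖w n‖) =o[l] (fun _ => (1 : ℝ) * 1) :=
    ((isLittleO_one_iff ℝ).2 hv).norm_left.mul_isBigO hw.norm_left
  exact (isLittleO_one_iff ℝ).1 (((isBigO_inner v w l).trans_isLittleO hprod).congr_right
    fun _ => one_mul 1)

theorem isLittleO_norm_sq_sub_norm_sq {r : ι → ℝ} (hvw : (fun n => v n - w n) =o[l] r)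
    (hv : v =O[l] (fun _ => (1 : ℝ))) (hw : w =O[l] (fun _ => (1 : ℝ))) :
    (fun n => ‖v n‖ ^ 2 - ‖w n‖ ^ 2) =o[l] r := by
  have hprod := (isBigO_inner (fun n => v n - w n) (fun n => v n + w n) l).trans_isLittleO
    (hvw.norm_left.mul_isBigO (hv.add hw).norm_left)
  refine hprod.congr (fun n => ?_) fun n => mul_one _
  rw [inner_sub_left, inner_add_right, inner_add_right, real_inner_self_eq_norm_sq,
    real_inner_self_eq_norm_sq, real_inner_comm (v n)]
  ring

end BoundedFamilies

section WeakConvergence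

variable {ι H : Type*} [NormedAddCommGroup H] [InnerProductSpace ℝ H] {l : Filter ι}
  {v w : ι → H} {p : H}

/-- Weak convergence of `v` to `p` along the filter `l`. -/
def WeaklyTendsto (v : ι → H) (l : Filter ι) (p : H) : Prop :=
  ∀ q : H, Tendsto (fun n => ⟪v n, q⟫) l (𝓝 ⟪p, q⟫)

namespace WeaklyTendsto

theorem of_tendsto_sub (hv : WeaklyTendsto v l p) (hwv : Tendsto (fun n => w n - v n) l (𝓝 0)) :
    WeaklyTendsto w l p := by
  intro q
  have hinner : Tendsto (fun n => ⟪w n - v n, q⟫) l (𝓝 0) := by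
    simpa only [inner_zero_left] using hwv.inner (tendsto_const_nhds (x := q))
  simpa only [inner_sub_left, sub_add_cancel, zero_add] using hinner.add (hv q)

/-- The demiclosedness principle. -/
theorem apply_eq_self [l.NeBot] {T : H → H} (hT : LipschitzWith 1 T) (hv : WeaklyTendsto v l p)
    (hbdd : v =O[l] (fun _ => (1 : ℝ))) (hres : Tendsto (fun n => v n - T (v n)) l (𝓝 0)) :
    T p = p := by
  have hle : ∀ n, ‖p - T p‖ ^ 2 ≤ 2 * ⟪v n - T (v n), T (v n) - T p⟫ + ‖v n - T (v n)‖ ^ 2 -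
      2 * ⟪v n - p, p - T p⟫ := by
    intro n
    have hsq : ‖T (v n) - T p‖ ^ 2 ≤ ‖v n - p‖ ^ 2 := by
      gcongr
      simpa using hT.norm_sub_le (v n) p
    have hp := norm_add_sq_real (v n - p) (p - T p)
    have hTv := norm_add_sq_real (v n - T (v n)) (T (v n) - T p)
    rw [sub_add_sub_cancel] at hp hTv
    linarith
  have hlim : Tendsto (fun n => 2 * ⟪v n - T (v n), T (v n) - T p⟫ + ‖v n - T (v n)‖ ^ 2 -
      2 * ⟪v n - p, p - T p⟫) l (𝓝 0) := by
    have hcross : Tendsto (fun n => ⟪v n - T (v n), T (v n) - T p⟫) l (𝓝 0) :=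
      tendsto_inner_zero hres ((isBigO_one_comp_of_lipschitzWith hT hbdd).sub
        (isBigO_const_const _ one_ne_zero l))
    have hweak : Tendsto (fun n => ⟪v n - p, p - T p⟫) l (𝓝 0) := by
      simpa only [inner_sub_left, sub_self] using (hv (p - T p)).sub_const ⟪p, p - T p⟫
    simpa using ((hcross.const_mul 2).add (hres.norm.pow 2)).sub (hweak.const_mul 2)
  have hzero : ‖p - T p‖ ^ 2 ≤ 0 := ge_of_tendsto' hlim hle
  exact (sub_eq_zero.1 (norm_eq_zero.1 (pow_eq_zero_iff two_ne_zero |>.1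
    (hzero.antisymm (sq_nonneg _))))).symm

end WeaklyTendsto

variable [CompleteSpace H] {F : H → ℝ}

theorem exists_add_inner_sub_le (hF : ConvexOn ℝ Set.univ F) (hlsc : LowerSemicontinuous F)
    {a : ℝ} (ha : a < F p) : ∃ g : H, ∀ y, a + ⟪y - p, g⟫ ≤ F y := by
  obtain ⟨φ, c, hle, heq⟩ := hF.exists_affine_le_of_lt (𝕜 := ℝ) (Set.mem_univ p) ha isClosed_univ
    (hlsc.lowerSemicontinuousOn _)
  refine ⟨(InnerProductSpace.toDual ℝ H).symm φ, fun y => ?_⟩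
  have hy : φ y + c ≤ F y := hle ⟨y, Set.mem_univ y⟩
  have hp : φ p + c = a := heq
  rw [real_inner_comm, InnerProductSpace.toDual_symm_apply, map_sub]
  linarith

theorem eventually_ge_of_isBigO_one (hF : ConvexOn ℝ Set.univ F) (hlsc : LowerSemicontinuous F)
    (hv : v =O[l] (fun _ => (1 : ℝ))) : ∃ m, ∀ᶠ n in l, m ≤ F (v n) := by
  obtain ⟨g, hg⟩ := exists_add_inner_sub_le hF hlsc (sub_one_lt (F 0))
  obtain ⟨C, hC⟩ := (isBigO_one_inner hv (isBigO_const_const g one_ne_zero l)).bound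
  refine ⟨F 0 - 1 - C, hC.mono fun n hn => ?_⟩
  have hgn := hg (v n)
  rw [sub_zero] at hgn
  rw [norm_one, mul_one, Real.norm_eq_abs] at hn
  linarith [(abs_le.1 hn).1]

/-- Weak sequential lower semicontinuity of convex functions. -/
theorem WeaklyTendsto.leModLittleO (hv : WeaklyTendsto v l p) (hF : ConvexOn ℝ Set.univ F)
    (hlsc : LowerSemicontinuous F) :
    LEModLittleO l (fun _ => 1) (fun _ => F p) (fun n => F (v n)) := by
  refine ⟨fun n => max (F p - F (v n)) 0, (isLittleO_one_iff ℝ).2 (tendsto_order.2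
    ⟨fun ε hε => .of_forall fun n => lt_max_of_lt_right hε, fun ε hε => ?_⟩),
    .of_forall fun n => by linarith [le_max_left (F p - F (v n)) 0]⟩
  obtain ⟨g, hg⟩ := exists_add_inner_sub_le hF hlsc (sub_lt_self (F p) (half_pos hε))
  filter_upwards [(hv g).eventually_const_lt (sub_lt_self _ (half_pos hε))] with n hn
  have hgn := hg (v n)
  rw [inner_sub_left] at hgn
  exact max_lt (by linarith) hε

end WeakConvergence

section Stage

variable {H : Type*} [NormedAddCommGroup H] [InnerProductSpace ℝ H] [CompleteSpace H]

/-- One inner step of the algorithm, for a fixed index `i`: `W` is its input `w⁽ⁱ⁾`, `Z`, `D`, `Y`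
are `z⁽ⁱ⁾`, `d⁽ⁱ⁾`, `y⁽ⁱ⁾`, and `W'` is its output `w⁽ⁱ⁺¹⁾`; `h'` is the gradient of `h`. -/
structure IsStage (f h : H → ℝ) (h' T : H → H) (u : H) (θ lam β α : ℕ → ℝ)
    (W Z D Y W' : ℕ → H) : Prop where
  continuous_f : Continuous f
  convexOn_f : ConvexOn ℝ Set.univ f
  convexOn_h : ConvexOn ℝ Set.univ h
  hasGradientAt : ∀ x, HasGradientAt h (h' x) x
  exists_lipschitzWith : ∃ K : ℝ≥0, LipschitzWith K h'
  isFirmlyNonexpansive : IsFirmlyNonexpansive T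
  extrapolate : ∀ n ≥ 1, Z n = W n + θ n • (W n - W (n - 1))
  direction : ∀ n ≥ 1, D (n + 1) = -h' (Z n) + β n • D n
  isProx : ∀ n ≥ 1, IsProx f (lam n) (Z n + lam n • D (n + 1)) (Y n)
  relax : ∀ n ≥ 1, W' n = α n • u + (1 - α n) • T (Y n)
  isBigO_Y : Y =O[atTop] (fun _ => (1 : ℝ))

namespace IsStage

variable {f h : H → ℝ} {h' T : H → H} {u : H} {θ lam β α : ℕ → ℝ} {W Z D Y W' : ℕ → H}

theorem convexOn_add (hs : IsStage f h h' T u θ lam β α W Z D Y W') :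
    ConvexOn ℝ Set.univ (fun v => f v + h v) :=
  hs.convexOn_f.add hs.convexOn_h

theorem lowerSemicontinuous_add (hs : IsStage f h h' T u θ lam β α W Z D Y W') :
    LowerSemicontinuous (fun v => f v + h v) :=
  (hs.continuous_f.add (continuous_iff_continuousAt.2 fun x =>
    (hs.hasGradientAt x).continuousAt)).lowerSemicontinuous

theorem isBigO_apply_Y (hs : IsStage f h h' T u θ lam β α W Z D Y W') :
    (fun n => T (Y n)) =O[atTop] (fun _ => (1 : ℝ)) :=
  isBigO_one_comp_of_lipschitzWith hs.isFirmlyNonexpansive.lipschitzWith_one hs.isBigO_Y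

theorem isBigO_output (hs : IsStage f h h' T u θ lam β α W Z D Y W')
    (hc : ControlSequences θ lam β α) : W' =O[atTop] (fun _ => (1 : ℝ)) :=
  ((isBigO_one_smul (hc.tendsto_α.isBigO_one ℝ) (isBigO_const_const u one_ne_zero _)).add
    (isBigO_one_smul ((hc.tendsto_α.const_sub 1).isBigO_one ℝ) hs.isBigO_apply_Y)).congr'
    ((eventually_ge_atTop 1).mono fun n hn => (hs.relax n hn).symm) .rfl

theorem extrapolation_isLittleO (hs : IsStage f h h' T u θ lam β α W Z D Y W')
    (hc : ControlSequences θ lam β α) (hW : W =O[atTop] (fun _ => (1 : ℝ))) :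
    (fun n => Z n - W n) =o[atTop] (fun n => α (n + 1) * lam (n + 1)) :=
  (isLittleO_smul_of_isBigO_one hc.θ_isLittleO
    (hW.sub (hW.comp_tendsto (tendsto_sub_atTop_nat 1)))).congr'
    ((eventually_ge_atTop 1).mono fun n hn => by
      simp only [hs.extrapolate n hn, add_sub_cancel_left, Function.comp_apply]) .rfl

theorem tendsto_Z_sub_W (hs : IsStage f h h' T u θ lam β α W Z D Y W')
    (hc : ControlSequences θ lam β α) (hW : W =O[atTop] (fun _ => (1 : ℝ))) :
    Tendsto (fun n => Z n - W n) atTop (𝓝 0) :=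
  ((hs.extrapolation_isLittleO hc hW).trans hc.scale_isLittleO_lam).trans_tendsto hc.tendsto_lam

theorem isBigO_Z (hs : IsStage f h h' T u θ lam β α W Z D Y W')
    (hc : ControlSequences θ lam β α) (hW : W =O[atTop] (fun _ => (1 : ℝ))) :
    Z =O[atTop] (fun _ => (1 : ℝ)) := by
  simpa only [sub_add_cancel] using ((hs.tendsto_Z_sub_W hc hW).isBigO_one ℝ).add hW

theorem isBigO_gradient (hs : IsStage f h h' T u θ lam β α W Z D Y W')
    (hc : ControlSequences θ lam β α) (hW : W =O[atTop] (fun _ => (1 : ℝ))) :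
    (fun n => h' (Z n)) =O[atTop] (fun _ => (1 : ℝ)) :=
  isBigO_one_comp_of_lipschitzWith hs.exists_lipschitzWith.choose_spec (hs.isBigO_Z hc hW)

theorem isBigO_D (hs : IsStage f h h' T u θ lam β α W Z D Y W')
    (hc : ControlSequences θ lam β α) (hW : W =O[atTop] (fun _ => (1 : ℝ))) :
    D =O[atTop] (fun _ => (1 : ℝ)) := by
  obtain ⟨C, hC⟩ := (hs.isBigO_gradient hc hW).bound
  have hβ : ∀ᶠ n in atTop, ‖β n‖ ≤ 1 / 2 :=
    hc.tendsto_β.norm.eventually_le_const (by norm_num)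
  obtain ⟨B, hB⟩ := exists_eventually_le_of_le_add_mul (a := fun n => ‖D n‖) (C := C)
    (c := 1 / 2) (by norm_num) (by norm_num) (by
      filter_upwards [hC, hβ, eventually_ge_atTop 1] with n hCn hβn hn
      rw [hs.direction n hn]
      refine (norm_add_le _ _).trans (add_le_add ?_ ?_)
      · simpa only [norm_neg, norm_one, mul_one] using hCn
      · rw [norm_smul]
        gcongr)
  exact .of_bound B (hB.mono fun n hn => by rwa [norm_one, mul_one])

theorem isBigO_forward (hs : IsStage f h h' T u θ lam β α W Z D Y W')
    (hc : ControlSequences θ lam β α) (hW : W =O[atTop] (fun _ => (1 : ℝ))) :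
    (fun n => Z n + lam n • D (n + 1)) =O[atTop] (fun _ => (1 : ℝ)) :=
  (hs.isBigO_Z hc hW).add (isBigO_one_smul (hc.tendsto_lam.isBigO_one ℝ)
    ((hs.isBigO_D hc hW).comp_tendsto (tendsto_add_atTop_nat 1)))

theorem norm_Z_sub_le (hs : IsStage f h h' T u θ lam β α W Z D Y W')
    (hc : ControlSequences θ lam β α) (hW : W =O[atTop] (fun _ => (1 : ℝ))) :
    LEModLittleO atTop (fun n => α (n + 1) * lam (n + 1)) (fun n => ‖Z (n + 1) - Z n‖)
      (fun n => ‖W (n + 1) - W n‖) := by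
  have herr := hs.extrapolation_isLittleO hc hW
  have herr' := (herr.comp_tendsto (tendsto_add_atTop_nat 1)).trans_isBigO
    hc.scale_succ_isBigO_scale
  refine .of_isLittleO (herr'.sub herr) (.of_forall fun n => ?_)
  refine (norm_add_le _ _).trans_eq' (congrArg norm ?_)
  simp only [Function.comp_apply]
  abel

theorem norm_forward_sub_le (hs : IsStage f h h' T u θ lam β α W Z D Y W')
    (hc : ControlSequences θ lam β α) (hW : W =O[atTop] (fun _ => (1 : ℝ))) :
    LEModLittleO atTop (fun n => α (n + 1) * lam (n + 1))
      (fun n => ‖(Z (n + 1) + lam (n + 1) • D (n + 2)) - (Z n + lam n • D (n + 1))‖)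
      (fun n => ‖Z (n + 1) - Z n‖) := by
  obtain ⟨K, hK⟩ := hs.exists_lipschitzWith
  have hD := hs.isBigO_D hc hW
  have hstep : ∀ᶠ n in atTop, lam (n + 1) * K ≤ 2 := by
    have : Tendsto (fun n => lam (n + 1) * K) atTop (𝓝 (0 * K)) :=
      (hc.tendsto_lam.comp (tendsto_add_atTop_nat 1)).mul_const _
    exact this.eventually_le_const (by norm_num)
  refine .of_isLittleO (((isLittleO_smul_of_isBigO_one hc.lam_mul_β_succ_isLittleO
    (hD.comp_tendsto (tendsto_add_atTop_nat 1))).sub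
    (isLittleO_smul_of_isBigO_one hc.lam_mul_β_isLittleO hD)).sub
    (isLittleO_smul_of_isBigO_one hc.lam_sub_isLittleO (hs.isBigO_gradient hc hW))) ?_
  filter_upwards [hstep, eventually_ge_atTop 1] with n hstepn hn
  refine le_trans ?_ (add_le_add_left (norm_gradientStep_sub_le hs.convexOn_h hs.hasGradientAt hK
    (hc.lam_pos (n + 1)).le hstepn (Z (n + 1)) (Z n)) _)
  refine (norm_add_le _ _).trans_eq' (congrArg norm ?_)
  rw [hs.direction n hn, hs.direction (n + 1) n.succ_pos]
  simp only [Function.comp_apply]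
  module

theorem norm_Y_sub_le (hs : IsStage f h h' T u θ lam β α W Z D Y W')
    (hc : ControlSequences θ lam β α) (hW : W =O[atTop] (fun _ => (1 : ℝ))) :
    LEModLittleO atTop (fun n => α (n + 1) * lam (n + 1)) (fun n => ‖Y (n + 1) - Y n‖)
      (fun n => ‖(Z (n + 1) + lam (n + 1) • D (n + 2)) - (Z n + lam n • D (n + 1))‖) := by
  refine .of_isLittleO (isLittleO_smul_of_isBigO_one hc.one_sub_lam_div_isLittleO
    ((hs.isBigO_forward hc hW).sub hs.isBigO_Y)) ((eventually_ge_atTop 1).mono fun n hn => ?_)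
  rw [norm_smul, Real.norm_eq_abs]
  exact (hs.isProx (n + 1) n.succ_pos).norm_sub_le (hs.isProx n hn) hs.convexOn_f
    (hc.lam_pos _) (hc.lam_pos _)

theorem norm_relax_sub_le (hs : IsStage f h h' T u θ lam β α W Z D Y W')
    (hc : ControlSequences θ lam β α) :
    LEModLittleO atTop (fun n => α (n + 1) * lam (n + 1)) (fun n => ‖W' (n + 1) - W' n‖)
      (fun n => (1 - α (n + 1)) * ‖Y (n + 1) - Y n‖) := by
  refine .of_isLittleO (isLittleO_smul_of_isBigO_one hc.α_sub_isLittleO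
    ((isBigO_const_const u one_ne_zero _).sub hs.isBigO_apply_Y)) ?_
  filter_upwards [eventually_ge_atTop 1, hc.eventually_one_sub_α_mem_Icc] with n hn hα
  have hT := hs.isFirmlyNonexpansive.lipschitzWith_one.norm_sub_le (Y (n + 1)) (Y n)
  rw [NNReal.coe_one, one_mul] at hT
  calc ‖W' (n + 1) - W' n‖
      = ‖(1 - α (n + 1)) • (T (Y (n + 1)) - T (Y n)) + (α (n + 1) - α n) • (u - T (Y n))‖ := by
        rw [hs.relax n hn, hs.relax (n + 1) n.succ_pos]
        congr 1
        module
    _ ≤ (1 - α (n + 1)) * ‖T (Y (n + 1)) - T (Y n)‖ + ‖(α (n + 1) - α n) • (u - T (Y n))‖ := by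
        refine (norm_add_le _ _).trans_eq ?_
        rw [norm_smul, Real.norm_of_nonneg hα.1]
    _ ≤ (1 - α (n + 1)) * ‖Y (n + 1) - Y n‖ + ‖(α (n + 1) - α n) • (u - T (Y n))‖ := by
        gcongr
        exact hα.1

theorem norm_output_sub_le (hs : IsStage f h h' T u θ lam β α W Z D Y W')
    (hc : ControlSequences θ lam β α) (hW : W =O[atTop] (fun _ => (1 : ℝ))) :
    LEModLittleO atTop (fun n => α (n + 1) * lam (n + 1)) (fun n => ‖W' (n + 1) - W' n‖)
      (fun n => (1 - α (n + 1)) * ‖W (n + 1) - W n‖) :=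
  (hs.norm_relax_sub_le hc).trans ((((hs.norm_Y_sub_le hc hW).trans
    (hs.norm_forward_sub_le hc hW)).trans (hs.norm_Z_sub_le hc hW)).mul_left
    hc.eventually_one_sub_α_mem_Icc)

theorem norm_Z_sub_sq_le (hs : IsStage f h h' T u θ lam β α W Z D Y W')
    (hc : ControlSequences θ lam β α) (hW : W =O[atTop] (fun _ => (1 : ℝ))) (v : H) :
    LEModLittleO atTop lam (fun n => ‖Z n - v‖ ^ 2) (fun n => ‖W n - v‖ ^ 2) := by
  have hv : (fun _ => v) =O[atTop] (fun _ : ℕ => (1 : ℝ)) := isBigO_const_const v one_ne_zero _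
  refine .of_isLittleO_sub (isLittleO_norm_sq_sub_norm_sq ?_ ((hs.isBigO_Z hc hW).sub hv)
    (hW.sub hv))
  simpa only [sub_sub_sub_cancel_right] using
    (hs.extrapolation_isLittleO hc hW).trans hc.scale_isLittleO_lam

theorem norm_Y_sub_sq_add_le (hs : IsStage f h h' T u θ lam β α W Z D Y W')
    (hc : ControlSequences θ lam β α) (hW : W =O[atTop] (fun _ => (1 : ℝ))) (v : H) :
    LEModLittleO atTop lam (fun n => ‖Y n - v‖ ^ 2 + ‖Z n - Y n‖ ^ 2 / 2)
      (fun n => ‖Z n - v‖ ^ 2 + 2 * lam n * (f v + h v - (f (Y n) + h (Y n)))) := by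
  obtain ⟨K, hK⟩ := hs.exists_lipschitzWith
  have hinner : (fun n => ⟪D n, Y n - v⟫) =O[atTop] (fun _ => (1 : ℝ)) :=
    isBigO_one_inner (hs.isBigO_D hc hW) (hs.isBigO_Y.sub (isBigO_const_const v one_ne_zero _))
  have hstep : ∀ᶠ n in atTop, lam n * K ≤ 1 / 2 := by
    have : Tendsto (fun n => lam n * K) atTop (𝓝 (0 * K)) := hc.tendsto_lam.mul_const _
    exact this.eventually_le_const (by norm_num)
  refine ⟨_, (isLittleO_smul_of_isBigO_one (hc.lam_mul_β_isLittleO.trans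
    hc.scale_isLittleO_lam) hinner).const_mul_left 2, ?_⟩
  filter_upwards [hstep, eventually_ge_atTop 1] with n hstepn hn
  have hp := hs.isProx n hn
  rw [hs.direction n hn, neg_add_eq_sub] at hp
  have hle := hp.norm_sub_sq_add_le hs.convexOn_f hs.convexOn_h hs.hasGradientAt hK
    (hc.lam_pos n) v
  rw [real_inner_smul_left] at hle
  rw [smul_eq_mul]
  linarith [mul_le_mul_of_nonneg_right hstepn (sq_nonneg ‖Z n - Y n‖)]

theorem norm_output_sub_sq_add_le (hs : IsStage f h h' T u θ lam β α W Z D Y W')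
    (hc : ControlSequences θ lam β α) {v : H} (hv : T v = v) :
    LEModLittleO atTop lam (fun n => ‖W' n - v‖ ^ 2 + ‖Y n - T (Y n)‖ ^ 2)
      (fun n => ‖Y n - v‖ ^ 2) := by
  refine ⟨_, isLittleO_smul_of_isBigO_one hc.α_isLittleO_lam
    (isBigO_const_const (‖u - v‖ ^ 2) one_ne_zero _), ?_⟩
  filter_upwards [eventually_ge_atTop 1, hc.tendsto_α.eventually_le_const one_pos] with n hn hα
  rw [hs.relax n hn, smul_eq_mul]
  linarith [norm_convexCombination_sub_sq_le (hc.α_pos n).le hα u (T (Y n)) v,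
    hs.isFirmlyNonexpansive.norm_sub_sq_add_norm_sub_sq_le hv (Y n)]

theorem norm_output_sub_sq_add_residual_le (hs : IsStage f h h' T u θ lam β α W Z D Y W')
    (hc : ControlSequences θ lam β α) (hW : W =O[atTop] (fun _ => (1 : ℝ))) {v : H}
    (hv : T v = v) :
    LEModLittleO atTop lam
      (fun n => ‖W' n - v‖ ^ 2 + (‖Z n - Y n‖ ^ 2 / 2 + ‖Y n - T (Y n)‖ ^ 2))
      (fun n => ‖W n - v‖ ^ 2 + 2 * lam n * (f v + h v - (f (Y n) + h (Y n)))) := by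
  obtain ⟨e, he, hle⟩ := ((hs.norm_output_sub_sq_add_le hc hv).add
    (hs.norm_Y_sub_sq_add_le hc hW v)).add (hs.norm_Z_sub_sq_le hc hW v)
  exact ⟨e, he, hle.mono fun n hn => by linarith⟩

theorem tendsto_output_sub_apply_Y (hs : IsStage f h h' T u θ lam β α W Z D Y W')
    (hc : ControlSequences θ lam β α) : Tendsto (fun n => W' n - T (Y n)) atTop (𝓝 0) := by
  have herr : (fun n => α n • (u - T (Y n))) =o[atTop] lam :=
    isLittleO_smul_of_isBigO_one hc.α_isLittleO_lam
      ((isBigO_const_const u one_ne_zero _).sub hs.isBigO_apply_Y)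
  refine (herr.trans_tendsto hc.tendsto_lam).congr'
    ((eventually_ge_atTop 1).mono fun n hn => ?_)
  simp only [hs.relax n hn]
  module

end IsStage

end Stage

section Scheme

variable {H : Type*} [NormedAddCommGroup H] [InnerProductSpace ℝ H] [CompleteSpace H]

/-- Algorithm 1 with `M` inner steps per iteration, where `w n i`, `z n i`, `d n i`, `y n i` are the
paper's `w_n⁽ⁱ⁾`, `z_n⁽ⁱ⁾`, `d_n⁽ⁱ⁾`, `y_n⁽ⁱ⁾`. The iterate `x_n` is `w n 1`, and `cycle` stands for
`x_{n+1} = w_n⁽ᴹ⁺¹⁾`. -/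
structure CyclicScheme (M : ℕ) (f h : ℕ → H → ℝ) (h' T : ℕ → H → H) (u : ℕ → H)
    (θ lam β α : ℕ → ℝ) (w z d y : ℕ → ℕ → H) : Prop where
  control : ControlSequences θ lam β α
  stage : ∀ i ∈ Finset.Icc 1 M, IsStage (f i) (h i) (h' i) (T i) (u i) θ lam β α
    (fun n => w n i) (fun n => z n i) (fun n => d n i) (fun n => y n i) (fun n => w n (i + 1))
  cycle : ∀ n ≥ 1, w (n + 1) 1 = w n (M + 1)

namespace CyclicScheme

variable {M : ℕ} {f h : ℕ → H → ℝ} {h' T : ℕ → H → H} {u : ℕ → H} {θ lam β α : ℕ → ℝ}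
  {w z d y : ℕ → ℕ → H}

theorem isBigO_w_succ (hs : CyclicScheme M f h h' T u θ lam β α w z d y) {i : ℕ}
    (hi : i ∈ Finset.Icc 1 M) : (fun n => w n (i + 1)) =O[atTop] (fun _ => (1 : ℝ)) :=
  (hs.stage i hi).isBigO_output hs.control

theorem isBigO_w_one (hs : CyclicScheme M f h h' T u θ lam β α w z d y) (hM : 1 ≤ M) :
    (fun n => w n 1) =O[atTop] (fun _ => (1 : ℝ)) := by
  rw [← map_add_atTop_eq_nat 1, isBigO_map]
  exact (hs.isBigO_w_succ (Finset.right_mem_Icc.2 hM)).congr'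
    ((eventually_ge_atTop 1).mono fun n hn => (hs.cycle n hn).symm) .rfl

theorem isBigO_w (hs : CyclicScheme M f h h' T u θ lam β α w z d y) {i : ℕ}
    (hi : i ∈ Finset.Icc 1 M) : (fun n => w n i) =O[atTop] (fun _ => (1 : ℝ)) := by
  obtain ⟨hi₁, hiM⟩ := Finset.mem_Icc.1 hi
  rcases hi₁.eq_or_lt with rfl | hlt
  · exact hs.isBigO_w_one hiM
  · obtain ⟨j, rfl⟩ := Nat.exists_eq_add_of_lt hlt
    exact hs.isBigO_w_succ (Finset.mem_Icc.2 ⟨by lia, by lia⟩)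

theorem norm_w_sub_le (hs : CyclicScheme M f h h' T u θ lam β α w z d y) {j : ℕ}
    (hj : j ∈ Finset.Icc 1 M) :
    LEModLittleO atTop (fun n => α (n + 1) * lam (n + 1))
      (fun n => ‖w (n + 1) (j + 1) - w n (j + 1)‖)
      (fun n => (1 - α (n + 1)) * ‖w (n + 1) 1 - w n 1‖) := by
  obtain ⟨hj₁, hjM⟩ := Finset.mem_Icc.1 hj
  have hstage := fun i hi => (hs.stage i hi).norm_output_sub_le hs.control (hs.isBigO_w hi)
  induction j, hj₁ using Nat.le_induction with
  | base => exact hstage 1 hj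
  | succ j hj₁ ih =>
    have hprev := ih (Finset.mem_Icc.2 ⟨hj₁, by lia⟩) (by lia)
    refine (hstage (j + 1) hj).trans (LEModLittleO.trans ?_ hprev)
    exact .of_eventuallyLE (.of_forall fun n => mul_le_of_le_one_left (norm_nonneg _)
      (sub_le_self 1 (hs.control.α_pos _).le))

theorem w_succ_sub_isLittleO (hs : CyclicScheme M f h h' T u θ lam β α w z d y) (hM : 1 ≤ M) :
    (fun n => w (n + 1) 1 - w n 1) =o[atTop] lam := by
  have hw := hs.isBigO_w_one hM
  refine (hs.control.isLittleO_lam_of_le (fun n => norm_nonneg (w (n + 1) 1 - w n 1))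
    ((hw.comp_tendsto (tendsto_add_atTop_nat 1)).sub hw).norm_left ?_).of_norm_left
  refine LEModLittleO.trans (.of_eventuallyLE ?_) (hs.norm_w_sub_le (Finset.right_mem_Icc.2 hM))
  filter_upwards [eventually_ge_atTop 1] with n hn
  rw [hs.cycle n hn, hs.cycle (n + 1) n.succ_pos]

theorem sum_residual_le (hs : CyclicScheme M f h h' T u θ lam β α w z d y) (hM : 1 ≤ M) {v : H}
    (hv : ∀ i ∈ Finset.Icc 1 M, T i v = v) :
    LEModLittleO atTop lam
      (fun n => ∑ i ∈ Finset.Icc 1 M, (‖z n i - y n i‖ ^ 2 / 2 + ‖y n i - T i (y n i)‖ ^ 2))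
      (fun n => 2 * lam n *
        ∑ i ∈ Finset.Icc 1 M, (f i v + h i v - (f i (y n i) + h i (y n i)))) := by
  have hconst : (fun _ => v) =O[atTop] (fun _ : ℕ => (1 : ℝ)) := isBigO_const_const v one_ne_zero _
  have hw := (hs.isBigO_w_one hM).sub hconst
  have hdrift : (fun n => ‖w n 1 - v‖ ^ 2 - ‖w (n + 1) 1 - v‖ ^ 2) =o[atTop] lam := by
    refine isLittleO_norm_sq_sub_norm_sq ?_ hw (hw.comp_tendsto (tendsto_add_atTop_nat 1))
    simpa only [sub_sub_sub_cancel_right, Function.comp_apply, neg_sub] using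
      (hs.w_succ_sub_isLittleO hM).neg_left
  obtain ⟨e, he, hle⟩ := LEModLittleO.sum fun i hi =>
    (hs.stage i hi).norm_output_sub_sq_add_residual_le hs.control (hs.isBigO_w hi) (hv i hi)
  refine ⟨_, he.add hdrift, ?_⟩
  filter_upwards [hle, eventually_ge_atTop 1] with n hle hn
  have htelescope := Finset.sum_Icc_sub hM (fun i => ‖w n i - v‖ ^ 2)
  simp only [Finset.sum_add_distrib, Finset.sum_sub_distrib, ← Finset.mul_sum, ← hs.cycle n hn]
    at hle htelescope ⊢
  linarith

theorem tendsto_residual (hs : CyclicScheme M f h h' T u θ lam β α w z d y) {v : H}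
    (hv : ∀ i ∈ Finset.Icc 1 M, T i v = v) {i : ℕ} (hi : i ∈ Finset.Icc 1 M) :
    Tendsto (fun n => ‖z n i - y n i‖ ^ 2 / 2 + ‖y n i - T i (y n i)‖ ^ 2) atTop (𝓝 0) := by
  have hM : 1 ≤ M := (Finset.mem_Icc.1 hi).1.trans (Finset.mem_Icc.1 hi).2
  have hbelow : ∀ j ∈ Finset.Icc 1 M, ∃ m, ∀ᶠ n in atTop, m ≤ f j (y n j) + h j (y n j) :=
    fun j hj => eventually_ge_of_isBigO_one (hs.stage j hj).convexOn_add
      (hs.stage j hj).lowerSemicontinuous_add (hs.stage j hj).isBigO_Y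
  choose! m hm using hbelow
  obtain ⟨e, he, hle⟩ := hs.sum_residual_le hM hv
  have hlim : Tendsto (fun n => 2 * lam n * ∑ j ∈ Finset.Icc 1 M, (f j v + h j v - m j) + e n)
      atTop (𝓝 0) := by
    simpa only [mul_zero, zero_mul, add_zero] using
      ((hs.control.tendsto_lam.const_mul 2).mul_const _).add
        (he.trans_tendsto hs.control.tendsto_lam)
  refine squeeze_zero' (.of_forall fun n => by positivity) ?_ hlim
  filter_upwards [hle, (Finset.Icc 1 M).eventually_all.2 hm] with n hle hmn
  have hlam := hs.control.lam_pos n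
  calc ‖z n i - y n i‖ ^ 2 / 2 + ‖y n i - T i (y n i)‖ ^ 2
      ≤ ∑ j ∈ Finset.Icc 1 M, (‖z n j - y n j‖ ^ 2 / 2 + ‖y n j - T j (y n j)‖ ^ 2) :=
        Finset.single_le_sum (f := fun j => ‖z n j - y n j‖ ^ 2 / 2 + ‖y n j - T j (y n j)‖ ^ 2)
          (fun j _ => by positivity) hi
    _ ≤ 2 * lam n * ∑ j ∈ Finset.Icc 1 M, (f j v + h j v - (f j (y n j) + h j (y n j))) + e n :=
        hle
    _ ≤ 2 * lam n * ∑ j ∈ Finset.Icc 1 M, (f j v + h j v - m j) + e n := by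
        gcongr with j hj
        exact hmn j hj

theorem tendsto_z_sub_y (hs : CyclicScheme M f h h' T u θ lam β α w z d y) {v : H}
    (hv : ∀ i ∈ Finset.Icc 1 M, T i v = v) {i : ℕ} (hi : i ∈ Finset.Icc 1 M) :
    Tendsto (fun n => z n i - y n i) atTop (𝓝 0) :=
  tendsto_zero_of_norm_sq_le
    (b := fun n => 2 * (‖z n i - y n i‖ ^ 2 / 2 + ‖y n i - T i (y n i)‖ ^ 2))
    (fun n => by linarith [sq_nonneg ‖y n i - T i (y n i)‖])
    (by simpa only [mul_zero] using (hs.tendsto_residual hv hi).const_mul 2)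

theorem tendsto_y_sub_apply (hs : CyclicScheme M f h h' T u θ lam β α w z d y) {v : H}
    (hv : ∀ i ∈ Finset.Icc 1 M, T i v = v) {i : ℕ} (hi : i ∈ Finset.Icc 1 M) :
    Tendsto (fun n => y n i - T i (y n i)) atTop (𝓝 0) :=
  tendsto_zero_of_norm_sq_le (fun n => le_add_of_nonneg_left (by positivity))
    (hs.tendsto_residual hv hi)

theorem tendsto_y_sub_w (hs : CyclicScheme M f h h' T u θ lam β α w z d y) {v : H}
    (hv : ∀ i ∈ Finset.Icc 1 M, T i v = v) {i : ℕ} (hi : i ∈ Finset.Icc 1 M) :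
    Tendsto (fun n => y n i - w n i) atTop (𝓝 0) := by
  simpa only [sub_sub_sub_cancel_left, sub_zero] using
    ((hs.stage i hi).tendsto_Z_sub_W hs.control (hs.isBigO_w hi)).sub (hs.tendsto_z_sub_y hv hi)

theorem tendsto_w_succ_sub_y (hs : CyclicScheme M f h h' T u θ lam β α w z d y) {v : H}
    (hv : ∀ i ∈ Finset.Icc 1 M, T i v = v) {i : ℕ} (hi : i ∈ Finset.Icc 1 M) :
    Tendsto (fun n => w n (i + 1) - y n i) atTop (𝓝 0) := by
  simpa only [sub_sub_sub_cancel_right, sub_zero] using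
    ((hs.stage i hi).tendsto_output_sub_apply_Y hs.control).sub (hs.tendsto_y_sub_apply hv hi)

theorem tendsto_w_sub_w_one (hs : CyclicScheme M f h h' T u θ lam β α w z d y) {v : H}
    (hv : ∀ i ∈ Finset.Icc 1 M, T i v = v) {i : ℕ} (hi : i ∈ Finset.Icc 1 M) :
    Tendsto (fun n => w n i - w n 1) atTop (𝓝 0) := by
  obtain ⟨hi₁, hiM⟩ := Finset.mem_Icc.1 hi
  induction i, hi₁ using Nat.le_induction with
  | base => simp only [sub_self, tendsto_const_nhds]
  | succ j hj₁ ih =>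
    have hj : j ∈ Finset.Icc 1 M := Finset.mem_Icc.2 ⟨hj₁, by lia⟩
    simpa only [sub_add_sub_cancel, add_zero] using
      ((hs.tendsto_w_succ_sub_y hv hj).add (hs.tendsto_y_sub_w hv hj)).add (ih hj (by lia))

theorem weaklyTendsto_y (hs : CyclicScheme M f h h' T u θ lam β α w z d y) {v : H}
    (hv : ∀ i ∈ Finset.Icc 1 M, T i v = v) {l : Filter ℕ} (hl : l ≤ atTop) {i j : ℕ}
    (hi : i ∈ Finset.Icc 1 M) (hj : j ∈ Finset.Icc 1 M) {p : H}
    (hp : WeaklyTendsto (fun n => w n i) l p) : WeaklyTendsto (fun n => y n j) l p := by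
  have hdiff := ((hs.tendsto_y_sub_w hv hj).add (hs.tendsto_w_sub_w_one hv hj)).sub
    (hs.tendsto_w_sub_w_one hv hi)
  simp only [sub_add_sub_cancel, sub_sub_sub_cancel_right, add_zero, sub_zero] at hdiff
  exact hp.of_tendsto_sub (hdiff.mono_left hl)

theorem sum_apply_y_le (hs : CyclicScheme M f h h' T u θ lam β α w z d y) (hM : 1 ≤ M) {v : H}
    (hv : ∀ i ∈ Finset.Icc 1 M, T i v = v) :
    LEModLittleO atTop (fun _ => 1) (fun n => ∑ i ∈ Finset.Icc 1 M, (f i (y n i) + h i (y n i)))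
      (fun _ => ∑ i ∈ Finset.Icc 1 M, (f i v + h i v)) := by
  have hlam := hs.control.lam_pos
  obtain ⟨e, he, hle⟩ := (hs.sum_residual_le hM hv).div_right hlam
  simp only [div_self (hlam _).ne'] at he
  refine ⟨fun n => e n / 2, by simpa only [div_eq_inv_mul] using he.const_mul_left _,
    hle.mono fun n hn => ?_⟩
  have hres : 0 ≤ (∑ i ∈ Finset.Icc 1 M,
      (‖z n i - y n i‖ ^ 2 / 2 + ‖y n i - T i (y n i)‖ ^ 2)) / lam n :=
    div_nonneg (Finset.sum_nonneg fun i _ => by positivity) (hlam n).le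
  beta_reduce at hn ⊢
  rw [mul_right_comm, mul_div_cancel_right₀ _ (hlam n).ne', Finset.sum_sub_distrib] at hn
  linarith

theorem apply_eq_self_of_weaklyTendsto (hs : CyclicScheme M f h h' T u θ lam β α w z d y) {v : H}
    (hv : ∀ i ∈ Finset.Icc 1 M, T i v = v) {l : Filter ℕ} [l.NeBot] (hl : l ≤ atTop) {i j : ℕ}
    (hi : i ∈ Finset.Icc 1 M) (hj : j ∈ Finset.Icc 1 M) {p : H}
    (hp : WeaklyTendsto (fun n => w n i) l p) : T j p = p :=
  (hs.weaklyTendsto_y hv hl hi hj hp).apply_eq_self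
    (hs.stage j hj).isFirmlyNonexpansive.lipschitzWith_one ((hs.stage j hj).isBigO_Y.mono hl)
    ((hs.tendsto_y_sub_apply hv hj).mono_left hl)

theorem sum_le_of_weaklyTendsto (hs : CyclicScheme M f h h' T u θ lam β α w z d y) {v : H}
    (hv : ∀ i ∈ Finset.Icc 1 M, T i v = v) {l : Filter ℕ} [l.NeBot] (hl : l ≤ atTop) {i : ℕ}
    (hi : i ∈ Finset.Icc 1 M) {p : H} (hp : WeaklyTendsto (fun n => w n i) l p) :
    ∑ j ∈ Finset.Icc 1 M, (f j p + h j p) ≤ ∑ j ∈ Finset.Icc 1 M, (f j v + h j v) := by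
  have hM : 1 ≤ M := (Finset.mem_Icc.1 hi).1.trans (Finset.mem_Icc.1 hi).2
  have hlsc := LEModLittleO.sum fun j hj => (hs.weaklyTendsto_y hv hl hi hj hp).leModLittleO
    (hs.stage j hj).convexOn_add (hs.stage j hj).lowerSemicontinuous_add
  exact (hlsc.trans ((hs.sum_apply_y_le hM hv).mono hl)).le_of_const

end CyclicScheme

end Scheme

theorem alg1_weak_cluster_points_in_Omega_general {H : Type*} [NormedAddCommGroup H]
    [InnerProductSpace ℝ H] [CompleteSpace H] {M : ℕ} {f h : ℕ → H → ℝ} {h' T : ℕ → H → H}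
    {u : ℕ → H} {θ lam β α : ℕ → ℝ} {w z d y : ℕ → ℕ → H}
    (hs : CyclicScheme M f h h' T u θ lam β α w z d y)
    (hfix : ∃ v, ∀ j ∈ Finset.Icc 1 M, T j v = v) {l : Filter ℕ} [l.NeBot] (hl : l ≤ atTop)
    {i : ℕ} (hi : i ∈ Finset.Icc 1 M) {p : H} (hp : WeaklyTendsto (fun n => w n i) l p) :
    (∀ j ∈ Finset.Icc 1 M, T j p = p) ∧ ∀ v, (∀ j ∈ Finset.Icc 1 M, T j v = v) →
      ∑ j ∈ Finset.Icc 1 M, (f j p + h j p) ≤ ∑ j ∈ Finset.Icc 1 M, (f j v + h j v) := by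
  obtain ⟨v, hv⟩ := hfix
  exact ⟨fun j hj => hs.apply_eq_self_of_weaklyTendsto hv hl hi hj hp,
    fun v hv => hs.sum_le_of_weaklyTendsto hv hl hi hp⟩

theorem alg1_weak_cluster_points_in_Omega
    {H : Type*} [NormedAddCommGroup H] [InnerProductSpace ℝ H] [CompleteSpace H]
    (M : ℕ) (hM : 1 ≤ M)
    (f h : ℕ → H → ℝ) (h' : ℕ → H → H) (L : ℕ → ℝ) (T : ℕ → H → H)
    (hf_cont : ∀ i ∈ Finset.Icc 1 M, Continuous (f i))
    (hf_conv : ∀ i ∈ Finset.Icc 1 M, ConvexOn ℝ Set.univ (f i))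
    (hh_conv : ∀ i ∈ Finset.Icc 1 M, ConvexOn ℝ Set.univ (h i))
    (hh_grad : ∀ i ∈ Finset.Icc 1 M, ∀ x : H, HasGradientAt (h i) (h' i x) x)
    (hL_pos : ∀ i ∈ Finset.Icc 1 M, 0 < L i)
    (hh_lip : ∀ i ∈ Finset.Icc 1 M, ∀ x y : H, ‖h' i x - h' i y‖ ≤ (1 / L i) * ‖x - y‖)
    (hT_firm : ∀ i ∈ Finset.Icc 1 M, ∀ x y : H,
      ‖T i x - T i y‖ ^ 2 ≤ @inner ℝ H _ (T i x - T i y) (x - y))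
    (S : Set H) (hS : S = ⋂ i ∈ Finset.Icc 1 M, {x : H | T i x = x}) (hS_ne : S.Nonempty)
    (θ lam β α : ℕ → ℝ) (σ : ℝ) (hσ : 1 ≤ σ)
    (hθ_range : ∀ n, 0 ≤ θ n ∧ θ n < 1)
    (hlam_pos : ∀ n, 0 < lam n)
    (hlam_le : ∀ n, ∀ i ∈ Finset.Icc 1 M, lam n ≤ 2 * L i)
    (hβ_range : ∀ n, 0 < β n ∧ β n ≤ 1)
    (hα_range : ∀ n, 0 < α n ∧ α n ≤ 1)
    (hθ_anti : Antitone θ) (hlam_anti : Antitone lam)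
    (hβ_anti : Antitone β) (hα_anti : Antitone α)
    (hθ_lim : Tendsto θ atTop (𝓝 0)) (hlam_lim : Tendsto lam atTop (𝓝 0))
    (hβ_lim : Tendsto β atTop (𝓝 0)) (hα_lim : Tendsto α atTop (𝓝 0))
    (hC1 : ¬ Summable α)
    (hC2 : Tendsto (fun n => (1 / α (n+1)) * |1 / lam (n+1) - 1 / lam n|) atTop (𝓝 0))
    (hC3 : Tendsto (fun n => (1 / lam (n+1)) * |1 - α n / α (n+1)|) atTop (𝓝 0))
    (hC4 : Tendsto (fun n => α n / lam n) atTop (𝓝 0))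
    (hC5 : Tendsto (fun n => θ n / (α (n+1) * lam (n+1))) atTop (𝓝 0))
    (hC6 : ∀ n, lam n / lam (n+1) ≤ σ)
    (hC7 : Tendsto (fun n => β n / α (n+1)) atTop (𝓝 0))
    (x : ℕ → H) (w z y d : ℕ → ℕ → H) (u : ℕ → H)
    (hd1 : ∀ i ∈ Finset.Icc 1 M, d 1 i = -(h' i (z 0 i)))
    (hw1 : ∀ n ≥ 1, w n 1 = x n)
    (hz : ∀ n ≥ 1, ∀ i ∈ Finset.Icc 1 M, z n i = w n i + θ n • (w n i - w (n-1) i))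
    (hd : ∀ n ≥ 1, ∀ i ∈ Finset.Icc 1 M, d (n+1) i = -(h' i (z n i)) + β n • d n i)
    (hy : ∀ n ≥ 1, ∀ i ∈ Finset.Icc 1 M, ∀ v : H,
      f i (y n i) + (1 / (2 * lam n)) * ‖z n i + lam n • d (n+1) i - y n i‖ ^ 2
        ≤ f i v + (1 / (2 * lam n)) * ‖z n i + lam n • d (n+1) i - v‖ ^ 2)
    (hw : ∀ n ≥ 1, ∀ i ∈ Finset.Icc 1 M,
      w n (i+1) = α n • u i + (1 - α n) • T i (y n i))
    (hx : ∀ n ≥ 1, x (n+1) = w n (M+1))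
    (hy_bdd : ∀ i ∈ Finset.Icc 1 M, ∃ C, ∀ n ≥ 1, ‖y n i‖ ≤ C)
    (ψ : H → ℝ) (hψ : ∀ v : H, ψ v = ∑ i ∈ Finset.Icc 1 M, (f i v + h i v))
    (hΩ_ne : ∃ p ∈ S, ∀ v ∈ S, ψ p ≤ ψ v)
    : ∀ i ∈ Finset.Icc 1 M, ∀ p : H,
      (∃ φ : ℕ → ℕ, StrictMono φ ∧
        ∀ q : H, Tendsto (fun k => @inner ℝ H _ (w (φ k) i) q) atTop (𝓝 (@inner ℝ H _ p q))) →
      p ∈ S ∧ ∀ v ∈ S, ψ p ≤ ψ v := by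
  have hmem : ∀ v, v ∈ S ↔ ∀ j ∈ Finset.Icc 1 M, T j v = v := fun v => by
    simp only [hS, Set.mem_iInter₂, Set.mem_ofPred_eq]
  have hscheme : CyclicScheme M f h h' T u θ lam β α w z d y :=
    { control := ⟨hlam_pos, fun n => (hα_range n).1, hlam_lim, hC1, hC2, hC3, hC4, hC5, hC7⟩
      stage := fun i hi =>
        { continuous_f := hf_cont i hi
          convexOn_f := hf_conv i hi
          convexOn_h := hh_conv i hi
          hasGradientAt := hh_grad i hi
          exists_lipschitzWith :=
            ⟨_, .of_dist_le' (by simpa only [dist_eq_norm] using hh_lip i hi)⟩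
          isFirmlyNonexpansive := hT_firm i hi
          extrapolate := fun n hn => hz n hn i hi
          direction := fun n hn => hd n hn i hi
          isProx := fun n hn => hy n hn i hi
          relax := fun n hn => hw n hn i hi
          isBigO_Y := (hy_bdd i hi).elim fun C hC => .of_bound C
            ((eventually_ge_atTop 1).mono fun n hn => by simpa using hC n hn) }
      cycle := fun n hn => by rw [hw1 (n + 1) n.succ_pos, hx n hn] }
  rintro i hi p ⟨φ, hφ, hp⟩
  simp only [hmem, hψ]
  exact alg1_weak_cluster_points_in_Omega_general hscheme (hS_ne.imp fun v => (hmem v).1)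
    (l := map φ atTop) hφ.tendsto_atTop hi fun q => tendsto_map'_iff.2 (hp q)
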